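/- Let E, F, G be real constants with F² + E·G > 0 and Q(u,v) = -E·u² + 2·F·u·v + G·v². Then E < 0 if and only if there is no C¹ curve c : [0,1] → ℝ² with continuous nowhere-vanishing derivative such that Q(c'(t)) ≤ 0 for all t and c(1) - c(0) = (n,0) for some integer n. (That is: the flat Lorentzian cylinder is causal, i.e. admits no closed causal curve, exactly when the fundamental vector field ∂x is spacelike; when E = 0 the circle t ↦ (x₀+t, y₀) is a closed lightlike curve and when E > 0 it is a closed timelike curve.) -/

import Mathlib

/-- The quadratic form of the flat Lorentzian metric `g = -E dx² + 2F dx dy + G dy²`. -/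
def Qform (E F G : ℝ) (p : ℝ × ℝ) : ℝ :=
  -E * p.1 ^ 2 + 2 * F * p.1 * p.2 + G * p.2 ^ 2

/-- When `∂x` is spacelike, a nonzero causal vector is not horizontal. -/
theorem snd_ne_zero_of_Qform_nonpos {E F G : ℝ} (hE : E < 0) {p : ℝ × ℝ} (hp : p ≠ 0)
    (hQ : Qform E F G p ≤ 0) : p.2 ≠ 0 := by
  intro h2
  have h1 : p.1 ≠ 0 := fun h1 => hp (Prod.ext h1 h2)
  have hpos : 0 < -E * p.1 ^ 2 := mul_pos (neg_pos.mpr hE) (by positivity)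
  simp only [Qform, h2] at hQ
  linarith

/-- The flat Lorentzian cylinder is causal (admits no closed causal curve) if and only
if the fundamental vector field `∂x` is spacelike, i.e. `E < 0`. -/
theorem stmt_12 (E F G : ℝ) (hLor : F ^ 2 + E * G > 0) :
    E < 0 ↔
      ¬ ∃ c c' : ℝ → ℝ × ℝ,
        (∀ t ∈ Set.Icc (0 : ℝ) 1, HasDerivAt c (c' t) t) ∧
        ContinuousOn c' (Set.Icc (0 : ℝ) 1) ∧
        (∀ t ∈ Set.Icc (0 : ℝ) 1, c' t ≠ 0) ∧
        (∀ t ∈ Set.Icc (0 : ℝ) 1, Qform E F G (c' t) ≤ 0) ∧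
        ∃ n : ℤ, c 1 - c 0 = ((n : ℝ), 0) := by
  constructor
  · rintro hE ⟨c, c', hc, -, hne, hQ, n, hn⟩
    have hy : ∀ t ∈ Set.Icc (0 : ℝ) 1, HasDerivAt (fun s => (c s).2) (c' t).2 t :=
      fun t ht => (hc t ht).snd
    have hends : (c 0).2 = (c 1).2 := by
      have h := congrArg Prod.snd hn
      simp only [Prod.snd_sub] at h
      linarith
    obtain ⟨t, ht, h0⟩ := exists_hasDerivAt_eq_zero one_pos
      (fun t ht => (hy t ht).continuousAt.continuousWithinAt) hends
      (fun t ht => hy t (Set.Ioo_subset_Icc_self ht))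
    have ht' := Set.Ioo_subset_Icc_self ht
    exact snd_ne_zero_of_Qform_nonpos hE (hne t ht') (hQ t ht') h0
  · intro h
    by_contra! hE
    refine h ⟨fun t => (t, 0), fun _ => (1, 0), fun t _ => ?_, continuousOn_const,
      fun _ _ => by simp, fun _ _ => by simpa [Qform] using hE, 1, by simp⟩
    exact (hasDerivAt_id t).prodMk (hasDerivAt_const t (0 : ℝ))
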